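/- Let (G,f) be an admissible pair, let 𝒳 and 𝒴 be finite sets, and let W be a channel from 𝒳 to 𝒴 that is permutation invariant: for every permutation π of 𝒳 there exists a permutation π' of 𝒴 such that W(π'(y)|π(x)) = W(y|x) for all x, y. Then the uniform pmf on 𝒳 maximizes the (G,f)-information: for every pmf p_X on 𝒳, I_{G,f}(uniform, W) ≥ I_{G,f}(p_X, W). -/

import Mathlib

open scoped BigOperators

/-- A probability mass function on a finite type: nonnegative and summing to 1. -/
def IsPMF {X : Type*} [Fintype X] (p : X → ℝ) : Prop :=
  (∀ x, 0 ≤ p x) ∧ ∑ x, p x = 1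

/-- Absolute continuity `p ≪ q`: `q x = 0` implies `p x = 0`. -/
def AbsCont {X : Type*} (p q : X → ℝ) : Prop :=
  ∀ x, q x = 0 → p x = 0

/-- The f-divergence `D_f(p‖q) = ∑_{x : q(x) > 0} q(x) f(p(x)/q(x))`. -/
noncomputable def fDiv {X : Type*} [Fintype X] (f : ℝ → ℝ) (p q : X → ℝ) : ℝ :=
  ∑ x, if 0 < q x then q x * f (p x / q x) else 0

/-- `D_m(f) = f 0 + lim_{t→∞} f t / t`, as an extended real.  For a convex `f`
with `f 1 = 0` the limit equals the supremum of the slopes `f t / (t-1)` over `t > 1`. -/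
noncomputable def Dm (f : ℝ → ℝ) : EReal :=
  (f 0 : EReal) + ⨆ t : {t : ℝ // 1 < t}, ((f t.1 / (t.1 - 1) : ℝ) : EReal)

/-- An admissible pair `(G, f)`: `f` is convex on `[0,∞)` with `f 1 = 0`, and
`G : [0, D_m(f)) → [0,∞)` is non-decreasing with `G 0 = 0`. -/
def Admissible (G f : ℝ → ℝ) : Prop :=
  ConvexOn ℝ (Set.Ici 0) f ∧ f 1 = 0 ∧ G 0 = 0 ∧
    (∀ a b : ℝ, 0 ≤ a → a ≤ b → (b : EReal) < Dm f → G a ≤ G b) ∧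
    (∀ a : ℝ, 0 ≤ a → (a : EReal) < Dm f → 0 ≤ G a)

/-- The `(G,f)`-information `I_{G,f}(p_X, p_{Y|X})`: the infimum over output pmfs
`q_Y` (with `p_{Y|X=x} ≪ q_Y` for all `x`) of `∑_x p_X x • G (D_f(p_{Y|X=x}‖q_Y))`. -/
noncomputable def Igf {X Y : Type*} [Fintype X] [Fintype Y]
    (G f : ℝ → ℝ) (pX : X → ℝ) (W : X → Y → ℝ) : ℝ :=
  sInf {v : ℝ | ∃ qY : Y → ℝ, IsPMF qY ∧ (∀ x, AbsCont (W x) qY) ∧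
    v = ∑ x, pX x * G (fDiv f (W x) qY)}

/-!
For each output pmf `q` the objective `∑ x, p x * G (D_f(W x‖q))` is affine in `p`, so the
`(G,f)`-information is an infimum of affine functions of the input pmf and hence concave.
Relabelling the inputs along a symmetry of the channel leaves it unchanged, the matching relabelling
of outputs being absorbed by the infimum. Averaging any input pmf over a transitive group of
symmetries yields the uniform pmf, and Jensen's inequality concludes.
-/

section ExpectConvex

variable {ι E : Type*} [Fintype ι] [AddCommGroup E] [Module ℝ E] [Module ℚ≥0 E]

lemma expect_eq_sum_inv_card_smul (v : ι → E) :
    𝔼 i, v i = ∑ i, (Fintype.card ι : ℝ)⁻¹ • v i := by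
  simp [Finset.expect, Finset.smul_sum, ← NNRat.cast_smul_eq_nnqsmul ℝ]

variable [Nonempty ι] {s : Set E} {v : ι → E}

lemma expect_mem_of_convex (hs : Convex ℝ s) (hv : ∀ i, v i ∈ s) : 𝔼 i, v i ∈ s := by
  rw [expect_eq_sum_inv_card_smul]
  exact hs.sum_mem (fun _ _ => by positivity) (by simp) fun i _ => hv i

lemma expect_map_le_map_expect_of_concaveOn {F : E → ℝ} (hF : ConcaveOn ℝ s F) (hv : ∀ i, v i ∈ s) :
    𝔼 i, F (v i) ≤ F (𝔼 i, v i) := by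
  rw [expect_eq_sum_inv_card_smul, expect_eq_sum_inv_card_smul]
  exact hF.le_map_sum (fun _ _ => by positivity) (by simp) fun i _ => hv i

end ExpectConvex

lemma concaveOn_iInf {ι E : Type*} [Nonempty ι] [AddCommMonoid E] [Module ℝ E] {s : Set E}
    {F : ι → E → ℝ} (hF : ∀ i, ConcaveOn ℝ s (F i))
    (hbdd : ∀ x ∈ s, BddBelow (Set.range fun i => F i x)) :
    ConcaveOn ℝ s fun x => ⨅ i, F i x := by
  refine ⟨(hF (Classical.arbitrary ι)).1, fun x hx y hy a b ha hb hab => le_ciInf fun i => ?_⟩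
  calc a • (⨅ j, F j x) + b • (⨅ j, F j y)
      ≤ a • F i x + b • F i y := by
        gcongr
        exacts [ciInf_le (hbdd x hx) i, ciInf_le (hbdd y hy) i]
    _ ≤ F i (a • x + b • y) := (hF i).2 hx hy ha hb hab

lemma expect_apply_smul {Γ X M : Type*} [Group Γ] [Fintype Γ] [Fintype X] [MulAction Γ X]
    [MulAction.IsPretransitive Γ X] [AddCommMonoid M] [Module ℚ≥0 M] (p : X → M) (x : X) :
    𝔼 g : Γ, p (g • x) = 𝔼 z, p z := by
  have : Nonempty X := ⟨x⟩
  have indep_of_point (z : X) : 𝔼 g : Γ, p (g • z) = 𝔼 g : Γ, p (g • x) := by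
    obtain ⟨h, rfl⟩ := MulAction.exists_smul_eq Γ x z
    exact Fintype.expect_equiv (Equiv.mulRight h) _ _ fun g => by simp [mul_smul]
  calc 𝔼 g : Γ, p (g • x)
      = 𝔼 z, 𝔼 g : Γ, p (g • z) := by simp only [indep_of_point, Fintype.expect_const]
    _ = 𝔼 g : Γ, 𝔼 z, p (g • z) := Finset.expect_comm ..
    _ = 𝔼 _g : Γ, 𝔼 z, p z :=
        Finset.expect_congr rfl fun g _ =>
          Fintype.expect_equiv (MulAction.toPerm g) _ _ fun _ => rfl
    _ = 𝔼 z, p z := Fintype.expect_const _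

section Relabelling

variable {X Y : Type*} (e : X ≃ Y) {p q : Y → ℝ}

lemma isPMF_comp_equiv [Fintype X] [Fintype Y] : IsPMF (p ∘ e) ↔ IsPMF p :=
  and_congr (e.forall_congr_right (q := fun y => 0 ≤ p y)) <| by
    simp only [Function.comp_apply, e.sum_comp p]

lemma absCont_comp_equiv : AbsCont (p ∘ e) (q ∘ e) ↔ AbsCont p q :=
  e.forall_congr_right (q := fun y => q y = 0 → p y = 0)

lemma fDiv_comp_equiv [Fintype X] [Fintype Y] (f : ℝ → ℝ) :
    fDiv f (p ∘ e) (q ∘ e) = fDiv f p q :=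
  e.sum_comp fun y => if 0 < q y then q y * f (p y / q y) else 0

end Relabelling

section Divergence

variable {f : ℝ → ℝ}

lemma coe_add_slope_le_Dm (f : ℝ → ℝ) {t : ℝ} (ht : 1 < t) :
    ((f 0 + f t / (t - 1) : ℝ) : EReal) ≤ Dm f := by
  rw [EReal.coe_add]
  exact add_le_add_right
    (le_iSup (fun t : {t : ℝ // 1 < t} => ((f t.1 / (t.1 - 1) : ℝ) : EReal)) ⟨t, ht⟩) _

lemma Dm_nonneg (hf : ConvexOn ℝ (Set.Ici 0) f) (hf1 : f 1 = 0) : 0 ≤ Dm f := by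
  have midpoint_le : f 1 ≤ (f 0 + f 2) / 2 := by
    have := hf.2 (show (0 : ℝ) ∈ Set.Ici 0 by simp) (show (2 : ℝ) ∈ Set.Ici 0 by simp)
      (show (0 : ℝ) ≤ 1 / 2 by norm_num) (show (0 : ℝ) ≤ 1 / 2 by norm_num) (by norm_num)
    norm_num at this
    linarith
  calc (0 : EReal) ≤ ((f 0 + f 2 / (2 - 1) : ℝ) : EReal) := by
        norm_cast
        norm_num
        linarith
    _ ≤ Dm f := coe_add_slope_le_Dm f one_lt_two

lemma le_lineMap_of_Dm_le (hf : ConvexOn ℝ (Set.Ici 0) f) (hf1 : f 1 = 0) {d : ℝ}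
    (hd : Dm f ≤ d) {r : ℝ} (hr : 0 ≤ r) : f r ≤ AffineMap.lineMap (f 0) d r := by
  have d_nonneg : 0 ≤ d := by exact_mod_cast (Dm_nonneg hf hf1).trans hd
  rw [AffineMap.lineMap_apply_ring]
  rcases le_or_gt r 1 with hr1 | hr1
  · have chord : f r ≤ (1 - r) * f 0 := by
      simpa [hf1] using hf.2 (show (0 : ℝ) ∈ Set.Ici 0 by simp)
        (show (1 : ℝ) ∈ Set.Ici 0 by simp) (sub_nonneg.2 hr1) hr (sub_add_cancel 1 r)
    linarith [mul_nonneg hr d_nonneg]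
  · have slope : f 0 + f r / (r - 1) ≤ d := by
      exact_mod_cast (coe_add_slope_le_Dm f hr1).trans hd
    have : f r ≤ (d - f 0) * (r - 1) :=
      (div_le_iff₀ (sub_pos.2 hr1)).1 (le_sub_iff_add_le'.2 slope)
    linarith

variable {Y : Type*} [Fintype Y] {p q : Y → ℝ}

lemma fDiv_eq_sum (f : ℝ → ℝ) (p : Y → ℝ) (hq : ∀ y, 0 ≤ q y) :
    fDiv f p q = ∑ y, q y * f (p y / q y) := by
  refine Finset.sum_congr rfl fun y _ => ?_
  rcases (hq y).eq_or_lt' with h | h <;> simp [h]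

lemma fDiv_nonneg (hf : ConvexOn ℝ (Set.Ici 0) f) (hf1 : f 1 = 0) (hp : IsPMF p) (hq : IsPMF q)
    (hpq : AbsCont p q) : 0 ≤ fDiv f p q := by
  have mean_ratio : ∑ y, q y * (p y / q y) = 1 := by
    simp only [mul_div_cancel_of_imp' (hpq _), hp.2]
  calc 0 = f (∑ y, q y * (p y / q y)) := by rw [mean_ratio, hf1]
    _ ≤ ∑ y, q y * f (p y / q y) :=
        hf.map_sum_le (fun y _ => hq.1 y) hq.2 fun y _ => div_nonneg (hp.1 y) (hq.1 y)
    _ = fDiv f p q := (fDiv_eq_sum f p hq.1).symm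

lemma fDiv_le_Dm (hf : ConvexOn ℝ (Set.Ici 0) f) (hf1 : f 1 = 0) (hp : IsPMF p) (hq : IsPMF q)
    (hpq : AbsCont p q) : (fDiv f p q : EReal) ≤ Dm f := by
  refine EReal.le_of_forall_lt_iff_le.1 fun d hd => EReal.coe_le_coe_iff.2 ?_
  calc fDiv f p q
      = ∑ y, q y * f (p y / q y) := fDiv_eq_sum f p hq.1
    _ ≤ ∑ y, q y * AffineMap.lineMap (f 0) d (p y / q y) := Finset.sum_le_sum fun y _ =>
        mul_le_mul_of_nonneg_left
          (le_lineMap_of_Dm_le hf hf1 hd.le (div_nonneg (hp.1 y) (hq.1 y))) (hq.1 y)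
    _ = ∑ y, (q y * f 0 + p y * (d - f 0)) := Finset.sum_congr rfl fun y _ => by
        rw [AffineMap.lineMap_apply_ring', mul_add, ← mul_assoc,
          mul_div_cancel_of_imp' (hpq y), add_comm]
    _ = d := by
        rw [Finset.sum_add_distrib, ← Finset.sum_mul, ← Finset.sum_mul, hp.2, hq.2]
        ring

lemma coe_fDiv_mem_Icc (hf : ConvexOn ℝ (Set.Ici 0) f) (hf1 : f 1 = 0) (hp : IsPMF p)
    (hq : IsPMF q) (hpq : AbsCont p q) : (fDiv f p q : EReal) ∈ Set.Icc 0 (Dm f) :=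
  ⟨EReal.coe_nonneg.2 (fDiv_nonneg hf hf1 hp hq hpq), fDiv_le_Dm hf hf1 hp hq hpq⟩

end Divergence

-- `G` may be negative at `D_m(f)`, outside the domain `[0, D_m(f))` where it is constrained, and a
-- divergence can attain `D_m(f)`; a single value does not affect boundedness.
lemma Admissible.bddBelow_image {G f : ℝ → ℝ} (hGf : Admissible G f) :
    BddBelow (G '' (Real.toEReal ⁻¹' Set.Icc 0 (Dm f))) := by
  obtain ⟨-, -, -, -, nonneg⟩ := hGf
  refine ⟨min 0 (G (Dm f).toReal), ?_⟩
  rintro _ ⟨a, ⟨ha0, ha⟩, rfl⟩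
  rcases ha.lt_or_eq with h | h
  · exact min_le_of_left_le (nonneg a (EReal.coe_nonneg.1 ha0) h)
  · simp [← h]

section Information

variable {X Y : Type*}

/-- The output pmfs over which the infimum defining the `(G,f)`-information of the channel `W` is
taken: those dominating `W x` for every input `x`. -/
def dominatingPMFs [Fintype Y] (W : X → Y → ℝ) : Set (Y → ℝ) :=
  {q | IsPMF q ∧ ∀ x, AbsCont (W x) q}

/-- The input relabellings `π` under which the channel `W` is invariant up to a matching relabelling
`π'` of its outputs. Permutation invariance of `W` says that this is the full symmetric group. -/
def inputSymmetryGroup (W : X → Y → ℝ) : Subgroup (Equiv.Perm X) where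
  carrier := {π | ∃ π' : Equiv.Perm Y, ∀ x y, W (π x) (π' y) = W x y}
  one_mem' := ⟨1, fun _ _ => rfl⟩
  mul_mem' := by
    rintro π σ ⟨π', hπ⟩ ⟨σ', hσ⟩
    exact ⟨π' * σ', fun x y => by simp [hπ, hσ]⟩
  inv_mem' := by
    rintro π ⟨π', hπ⟩
    exact ⟨π'⁻¹, fun x y => by simp [← hπ ((Equiv.symm π) x)]⟩

variable {W : X → Y → ℝ}

lemma isPretransitive_inputSymmetryGroup
    (hW : ∀ π : Equiv.Perm X, ∃ π' : Equiv.Perm Y, ∀ x y, W (π x) (π' y) = W x y) :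
    MulAction.IsPretransitive (inputSymmetryGroup W) X := by
  classical
  exact ⟨fun x y => ⟨⟨Equiv.swap x y, hW _⟩, Equiv.swap_apply_left x y⟩⟩

variable [Fintype Y]

lemma comp_mem_dominatingPMFs_iff {π : Equiv.Perm X} {π' : Equiv.Perm Y}
    (hπ : ∀ x, W (π x) ∘ π' = W x) {q : Y → ℝ} :
    q ∘ π' ∈ dominatingPMFs W ↔ q ∈ dominatingPMFs W :=
  and_congr (isPMF_comp_equiv π') <| by
    rw [← π.forall_congr_right (q := fun x => AbsCont (W x) q)]
    simp only [← absCont_comp_equiv π' (q := q), hπ]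

lemma nonempty_dominatingPMFs [Finite X] [Nonempty X] (hW : ∀ x, IsPMF (W x)) :
    (dominatingPMFs W).Nonempty := by
  cases nonempty_fintype X
  refine ⟨𝔼 x, W x, expect_mem_of_convex (convex_stdSimplex ℝ Y) hW, fun x y h => ?_⟩
  rw [Finset.expect_apply, Fintype.expect_eq_zero_iff_of_nonneg fun x => (hW x).1 y] at h
  exact congrFun h x

variable [Fintype X]

lemma Igf_eq_iInf (G f : ℝ → ℝ) (p : X → ℝ) (W : X → Y → ℝ) :
    Igf G f p W = ⨅ q : dominatingPMFs W, ∑ x, p x * G (fDiv f (W x) q) := by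
  rw [← sInf_image' (s := dominatingPMFs W)
    (f := fun q => ∑ x, p x * G (fDiv f (W x) q)), Igf]
  congr 1
  ext v
  simp [dominatingPMFs, and_assoc, eq_comm]

lemma Igf_comp_of_mem_inputSymmetryGroup (G f : ℝ → ℝ) (p : X → ℝ) {π : Equiv.Perm X}
    (hπ : π ∈ inputSymmetryGroup W) : Igf G f (p ∘ π) W = Igf G f p W := by
  obtain ⟨π', hπ'⟩ := hπ
  replace hπ' (x : X) : W (π x) ∘ π' = W x := funext (hπ' x)
  rw [Igf_eq_iInf, Igf_eq_iInf]
  let relabel : dominatingPMFs W ≃ dominatingPMFs W :=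
    (π'.symm.arrowCongr (Equiv.refl ℝ)).subtypeEquiv fun _ =>
      (comp_mem_dominatingPMFs_iff hπ').symm
  refine (relabel.iInf_congr fun q => ?_).symm
  calc ∑ x, p (π x) * G (fDiv f (W x) (q ∘ π'))
      = ∑ x, p (π x) * G (fDiv f (W (π x)) q) := by
        simp only [← fDiv_comp_equiv π' (q := q), hπ']
    _ = ∑ x, p x * G (fDiv f (W x) q) := Equiv.sum_comp π fun x => p x * G (fDiv f (W x) q)

variable {G f : ℝ → ℝ}

lemma bddBelow_range_sum_mul_fDiv (hf : ConvexOn ℝ (Set.Ici 0) f) (hf1 : f 1 = 0)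
    (hG : BddBelow (G '' (Real.toEReal ⁻¹' Set.Icc 0 (Dm f)))) (hW : ∀ x, IsPMF (W x))
    {p : X → ℝ} (hp : IsPMF p) :
    BddBelow (Set.range fun q : dominatingPMFs W => ∑ x, p x * G (fDiv f (W x) q)) := by
  obtain ⟨c, hc⟩ := hG
  refine ⟨c, ?_⟩
  rintro _ ⟨⟨q, hq, hWq⟩, rfl⟩
  calc c = ∑ x, p x * c := by rw [← Finset.sum_mul, hp.2, one_mul]
    _ ≤ ∑ x, p x * G (fDiv f (W x) q) := Finset.sum_le_sum fun x _ =>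
        mul_le_mul_of_nonneg_left
          (hc ⟨_, coe_fDiv_mem_Icc hf hf1 (hW x) hq (hWq x), rfl⟩) (hp.1 x)

lemma concaveOn_Igf [Nonempty X] (hf : ConvexOn ℝ (Set.Ici 0) f) (hf1 : f 1 = 0)
    (hG : BddBelow (G '' (Real.toEReal ⁻¹' Set.Icc 0 (Dm f)))) (hW : ∀ x, IsPMF (W x)) :
    ConcaveOn ℝ (stdSimplex ℝ X) fun p => Igf G f p W := by
  have := (nonempty_dominatingPMFs hW).to_subtype
  simp only [Igf_eq_iInf]
  refine concaveOn_iInf (fun q => ?_) fun p hp => bddBelow_range_sum_mul_fDiv hf hf1 hG hW hp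
  exact (Fintype.linearCombination ℝ fun x => G (fDiv f (W x) q)).concaveOn
    (convex_stdSimplex ℝ X)

end Information

theorem Igf_uniform_maximizes_of_perm_invariant_general
    {X Y : Type*} [Fintype X] [Fintype Y] {G f : ℝ → ℝ}
    (hf : ConvexOn ℝ (Set.Ici 0) f) (hf1 : f 1 = 0)
    (hG : BddBelow (G '' (Real.toEReal ⁻¹' Set.Icc 0 (Dm f))))
    {W : X → Y → ℝ} (hW : ∀ x, IsPMF (W x))
    [MulAction.IsPretransitive (inputSymmetryGroup W) X] {pX : X → ℝ} (hpX : IsPMF pX) :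
    Igf G f pX W ≤ Igf G f (fun _ => 1 / (Fintype.card X : ℝ)) W := by
  have := Fintype.ofFinite (inputSymmetryGroup W)
  have : Nonempty X := by
    by_contra! hX
    simpa using hpX.2
  calc Igf G f pX W
      = 𝔼 g : inputSymmetryGroup W, Igf G f (pX ∘ g.1) W := by
        simp only [Igf_comp_of_mem_inputSymmetryGroup G f pX (Subtype.prop _),
          Fintype.expect_const]
    _ ≤ Igf G f (𝔼 g : inputSymmetryGroup W, pX ∘ g.1) W :=
        expect_map_le_map_expect_of_concaveOn (concaveOn_Igf hf hf1 hG hW)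
          fun g => (isPMF_comp_equiv g.1).2 hpX
    _ = Igf G f (fun _ => 1 / (Fintype.card X : ℝ)) W := by
        congr 1
        ext x
        rw [Finset.expect_apply, ← hpX.2, ← Fintype.expect_eq_sum_div_card]
        exact expect_apply_smul pX x

/-- For a permutation-invariant channel `W`, the uniform input distribution
maximizes the `(G,f)`-information. -/
theorem Igf_uniform_maximizes_of_perm_invariant
    {X Y : Type*} [Fintype X] [Fintype Y] [Nonempty X]
    (G f : ℝ → ℝ) (hGf : Admissible G f)
    (W : X → Y → ℝ) (hW : ∀ x, IsPMF (W x))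
    (hperm : ∀ π : Equiv.Perm X, ∃ π' : Equiv.Perm Y, ∀ x y, W (π x) (π' y) = W x y)
    (pX : X → ℝ) (hpX : IsPMF pX) :
    Igf G f pX W ≤ Igf G f (fun _ => 1 / (Fintype.card X : ℝ)) W := by
  have := isPretransitive_inputSymmetryGroup hperm
  exact Igf_uniform_maximizes_of_perm_invariant_general hGf.1 hGf.2.1 hGf.bddBelow_image hW hpX
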